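/- arXiv:2404.10839 — 6 statements merged into one kernel-verified Lean document; each statement's English description precedes it below -/
import Mathlib

section
/- Let F be a field, α₁,…,αₙ ∈ F and β₁,…,β_m ∈ F (not necessarily distinct), and set f(x) = ∏_{i=1}^n (x − αᵢ) and g(x) = ∏_{j=1}^m (x − βⱼ). Then the resultant satisfies res(f,g) = ∏_{i=1}^n ∏_{j=1}^m (αᵢ − βⱼ) = ∏_{i=1}^n g(αᵢ) = (−1)^{nm} ∏_{j=1}^m f(βⱼ). -/
/-- The Sylvester matrix of two polynomials `f, g` with respect to the (formal) degrees
`n` and `m`: an `(n+m) × (n+m)` matrix whose first `m` columns are the shifted coefficient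
vectors of `f` (column `j`, for `0 ≤ j < m`, has `f_n, f_{n-1}, …, f_0` in rows
`j, j+1, …, j+n`) and whose last `n` columns are the shifted coefficient vectors of `g`
(column `m + j`, for `0 ≤ j < n`, has `g_m, g_{m-1}, …, g_0` in rows `j, j+1, …, j+m`). -/
noncomputable def sylvesterMatrix {R : Type*} [CommRing R] (f g : Polynomial R) (n m : ℕ) :
    Matrix (Fin (n + m)) (Fin (n + m)) R :=
  Matrix.of fun i j =>
    if (j : ℕ) < m then
      if (j : ℕ) ≤ (i : ℕ) ∧ (i : ℕ) ≤ (j : ℕ) + n then f.coeff (n + (j : ℕ) - (i : ℕ)) else 0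
    else
      if (j : ℕ) - m ≤ (i : ℕ) ∧ (i : ℕ) ≤ ((j : ℕ) - m) + m then
        g.coeff (m + ((j : ℕ) - m) - (i : ℕ)) else 0

/-- The resultant of `f` and `g` (of degrees `n` and `m`): the determinant of the
Sylvester matrix `Syl(f, g)`. -/
noncomputable def resultant {R : Type*} [CommRing R] (f g : Polynomial R) (n m : ℕ) : R :=
  (sylvesterMatrix f g n m).det

/-! The Sylvester matrix here is Mathlib's with both index sets reversed, so the two determinants
agree. Multiplicativity of the resultant in `f` then reduces everything to linear factors, where
`res(x - a, g) = g(a)`; antisymmetry gives the formula in terms of the roots of `g`. -/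

section

open Finset
open Polynomial hiding resultant resultant_comm

variable {R : Type*} [CommRing R]

theorem sylvesterMatrix_eq_submatrix_revPerm (f g : R[X]) (n m : ℕ) :
    sylvesterMatrix f g n m = (sylvester f g n m).submatrix Fin.revPerm Fin.revPerm := by
  ext i j
  obtain ⟨j, rfl⟩ := Fin.revPerm.surjective j
  induction j using Fin.addCases with
  | left j =>
    simp only [sylvesterMatrix, sylvester, Matrix.of_apply, Matrix.submatrix_apply,
      Fin.revPerm_apply, Fin.rev_rev, Fin.addCases_left, Fin.val_rev, Fin.val_castAdd, Set.mem_Icc]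
    rw [if_neg (by lia)]
    exact ite_congr (by grind) (fun _ ↦ congrArg g.coeff (by lia)) fun _ ↦ rfl
  | right j =>
    simp only [sylvesterMatrix, sylvester, Matrix.of_apply, Matrix.submatrix_apply,
      Fin.revPerm_apply, Fin.rev_rev, Fin.addCases_right, Fin.val_rev, Fin.val_natAdd, Set.mem_Icc]
    rw [if_pos (by lia)]
    exact ite_congr (by grind) (fun _ ↦ congrArg f.coeff (by lia)) fun _ ↦ rfl

theorem resultant_eq_polynomial_resultant (f g : R[X]) (n m : ℕ) :
    resultant f g n m = Polynomial.resultant f g n m := by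
  rw [resultant, sylvesterMatrix_eq_submatrix_revPerm, Matrix.det_submatrix_equiv_self,
    Polynomial.resultant]

theorem resultant_comm (f g : R[X]) (n m : ℕ) :
    resultant f g n m = (-1) ^ (n * m) * resultant g f m n := by
  simp only [resultant_eq_polynomial_resultant, Polynomial.resultant_comm f g n m]

variable {ι κ : Type*} (s : Finset ι) (t : Finset κ) (α : ι → R) (β : κ → R)

theorem natDegree_prod_X_sub_C_le : (∏ i ∈ s, (X - C (α i))).natDegree ≤ #s := by
  nontriviality R
  exact (natDegree_finsetProd_X_sub_C_eq_card s α).le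

theorem resultant_prod_X_sub_C_left {g : R[X]} {m : ℕ} (hg : g.natDegree ≤ m) :
    resultant (∏ i ∈ s, (X - C (α i))) g #s m = ∏ i ∈ s, g.eval (α i) := by
  nontriviality R
  have leading_ne_zero : ∏ i ∈ s, (X - C (α i)).leadingCoeff ≠ 0 := by simp
  have factor := Polynomial.resultant_prod_left s (fun i ↦ X - C (α i)) g m leading_ne_zero hg
  rw [natDegree_finsetProd_X_sub_C_eq_card] at factor
  simp only [resultant_eq_polynomial_resultant, factor, natDegree_X_sub_C,
    Polynomial.resultant_X_sub_C_left _ _ _ hg]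

theorem resultant_prod_X_sub_C_right {f : R[X]} {n : ℕ} (hf : f.natDegree ≤ n) :
    resultant f (∏ j ∈ t, (X - C (β j))) n #t = (-1) ^ (n * #t) * ∏ j ∈ t, f.eval (β j) := by
  rw [resultant_comm, resultant_prod_X_sub_C_left t β hf]

theorem resultant_eq_prod_roots_general :
    resultant (∏ i ∈ s, (X - C (α i))) (∏ j ∈ t, (X - C (β j))) #s #t =
      ∏ i ∈ s, ∏ j ∈ t, (α i - β j) ∧
    resultant (∏ i ∈ s, (X - C (α i))) (∏ j ∈ t, (X - C (β j))) #s #t =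
      ∏ i ∈ s, (∏ j ∈ t, (X - C (β j))).eval (α i) ∧
    resultant (∏ i ∈ s, (X - C (α i))) (∏ j ∈ t, (X - C (β j))) #s #t =
      (-1) ^ (#s * #t) * ∏ j ∈ t, (∏ i ∈ s, (X - C (α i))).eval (β j) := by
  have eval_at_roots := resultant_prod_X_sub_C_left s α (natDegree_prod_X_sub_C_le t β)
  refine ⟨?_, eval_at_roots, resultant_prod_X_sub_C_right t β (natDegree_prod_X_sub_C_le s α)⟩
  simpa only [eval_prod, eval_sub, eval_X, eval_C] using eval_at_roots

end

/-- **The resultant as a product over roots.**  For `f(x) = ∏ᵢ (x - αᵢ)` and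
`g(x) = ∏ⱼ (x - βⱼ)` over a field `F`, the resultant satisfies
`res(f, g) = ∏ᵢ ∏ⱼ (αᵢ - βⱼ) = ∏ᵢ g(αᵢ) = (-1)^(n m) ∏ⱼ f(βⱼ)`. -/
theorem resultant_eq_prod_roots {F : Type*} [Field F] (n m : ℕ) (α : Fin n → F)
    (β : Fin m → F) :
    resultant (∏ i : Fin n, (Polynomial.X - Polynomial.C (α i)))
        (∏ j : Fin m, (Polynomial.X - Polynomial.C (β j))) n m =
      ∏ i : Fin n, ∏ j : Fin m, (α i - β j) ∧
    resultant (∏ i : Fin n, (Polynomial.X - Polynomial.C (α i)))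
        (∏ j : Fin m, (Polynomial.X - Polynomial.C (β j))) n m =
      ∏ i : Fin n, (∏ j : Fin m, (Polynomial.X - Polynomial.C (β j))).eval (α i) ∧
    resultant (∏ i : Fin n, (Polynomial.X - Polynomial.C (α i)))
        (∏ j : Fin m, (Polynomial.X - Polynomial.C (β j))) n m =
      (-1) ^ (n * m) *
        ∏ j : Fin m, (∏ i : Fin n, (Polynomial.X - Polynomial.C (α i))).eval (β j) := by
  simpa only [Finset.card_fin] using
    resultant_eq_prod_roots_general Finset.univ Finset.univ α β
end

section
/- Let F be a field, s a nonempty finite index set, (fᵢ)_{i∈s} polynomials in F[x], and p ∈ F[x] a nonzero polynomial such that fᵢ divides p for every i ∈ s. Then (lcm_{i∈s} fᵢ) · (gcd_{i∈s} (p / fᵢ)) is associated to p; in particular lcm_{i∈s} fᵢ is associated to p / gcd_{i∈s}(p / fᵢ). -/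
section NormalizedGCDMonoid

variable {R ι : Type*} [CommMonoidWithZero R] [NormalizedGCDMonoid R] {s : Finset ι}

theorem finset_lcm_mul_dvd_iff (hs : s.Nonempty) {f : ι → R} {a b : R} :
    s.lcm f * a ∣ b ↔ ∀ i ∈ s, f i * a ∣ b := by
  refine ⟨fun h i hi => (mul_dvd_mul_right (Finset.dvd_lcm hi) a).trans h, fun h => ?_⟩
  obtain ⟨j, hj⟩ := hs
  obtain ⟨c, rfl⟩ : a ∣ b := (dvd_mul_left a (f j)).trans (h j hj)
  obtain rfl | ha := eq_or_ne a 0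
  · simp
  · simp only [mul_comm _ a, mul_dvd_mul_iff_left ha] at h ⊢
    exact Finset.lcm_dvd h

theorem dvd_mul_finset_gcd_iff {g : ι → R} {a b : R} :
    b ∣ a * s.gcd g ↔ ∀ i ∈ s, b ∣ a * g i := by
  rw [← (Finset.gcd_mul_left' s g a).dvd_iff_dvd_right, Finset.dvd_gcd_iff]

theorem associated_lcm_mul_gcd_of_mul_eq (hs : s.Nonempty) {f g : ι → R} {p : R}
    (hfg : ∀ i ∈ s, f i * g i = p) : Associated (s.lcm f * s.gcd g) p := by
  apply associated_of_dvd_dvd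
  · refine (finset_lcm_mul_dvd_iff hs).2 fun i hi => ?_
    rw [← hfg i hi]
    exact mul_dvd_mul_left (f i) (Finset.gcd_dvd hi)
  · refine dvd_mul_finset_gcd_iff.2 fun i hi => ?_
    rw [← hfg i hi]
    exact mul_dvd_mul_right (Finset.dvd_lcm hi) (g i)

end NormalizedGCDMonoid

section Div

variable {R : Type*} [CommMonoidWithZero R] [Div R] [MulDivCancelClass R]

theorem mul_div_cancel_of_dvd_of_ne_zero {a b : R} (hab : a ∣ b) (hb : b ≠ 0) :
    a * (b / a) = b := by
  obtain ⟨c, rfl⟩ := hab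
  rw [mul_div_cancel_left₀ c (left_ne_zero_of_mul hb)]

theorem associated_div_of_associated_mul {a b c : R} (hb : b ≠ 0) (h : Associated (a * b) c) :
    Associated a (c / b) := by
  obtain ⟨u, rfl⟩ := h
  rw [mul_right_comm, mul_div_cancel_right₀ _ hb]
  exact ⟨u, rfl⟩

theorem lcm_mul_gcd_div_associated_general [NormalizedGCDMonoid R] {ι : Type*} {s : Finset ι}
    (hs : s.Nonempty) {f : ι → R} {p : R} (hp : p ≠ 0) (hdvd : ∀ i ∈ s, f i ∣ p) :
    Associated (s.lcm f * s.gcd (fun i => p / f i)) p ∧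
    Associated (s.lcm f) (p / s.gcd (fun i => p / f i)) := by
  have lcm_mul_gcd : Associated (s.lcm f * s.gcd (fun i => p / f i)) p :=
    associated_lcm_mul_gcd_of_mul_eq hs fun i hi =>
      mul_div_cancel_of_dvd_of_ne_zero (hdvd i hi) hp
  have gcd_ne_zero : s.gcd (fun i => p / f i) ≠ 0 :=
    right_ne_zero_of_mul (lcm_mul_gcd.ne_zero_iff.2 hp)
  exact ⟨lcm_mul_gcd, associated_div_of_associated_mul gcd_ne_zero lcm_mul_gcd⟩

end Div

/-- **LCM from GCD of cofactors.**  Let `F` be a field, `s` a nonempty finite index set,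
`(fᵢ)_{i ∈ s}` polynomials in `F[x]`, and `p ∈ F[x]` a nonzero polynomial divisible by
every `fᵢ`.  Then `(lcm_{i ∈ s} fᵢ) · (gcd_{i ∈ s} (p / fᵢ))` is associated to `p`;
in particular `lcm_{i ∈ s} fᵢ` is associated to `p / gcd_{i ∈ s} (p / fᵢ)`. -/
theorem lcm_mul_gcd_div_associated {F : Type*} [Field F] [DecidableEq F] {ι : Type*} (s : Finset ι)
    (hs : s.Nonempty) (f : ι → Polynomial F) (p : Polynomial F) (hp : p ≠ 0)
    (hdvd : ∀ i ∈ s, f i ∣ p) :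
    Associated (s.lcm f * s.gcd (fun i => p / f i)) p ∧
    Associated (s.lcm f) (p / s.gcd (fun i => p / f i)) :=
  lcm_mul_gcd_div_associated_general hs hp hdvd
end

section
/- Let F be a field and f, g ∈ F[x] nonzero polynomials with n = deg f and m = deg g. Suppose f and g are coprime, i.e., gcd(f,g) = 1. Then for every natural number k with k < n + m, there exists a unique pair of polynomials (a, b) in F[x] such that deg a < m, deg b < n (with the convention deg 0 = −∞), and a·f + b·g = x^k. -/
/-!
The matrix of the map `(b, a) ↦ f * a + g * b` is the Sylvester matrix, whose determinant is the
resultant. Composing with the map of the adjugate matrix, on either side, gives multiplication by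
the resultant, so the Sylvester map is bijective as soon as the resultant is a unit. Over a field
this is the case when `f` and `g` are coprime.
-/

open Polynomial

section CommRing

variable {R : Type*} [CommRing R] {m n : ℕ} {f g : R[X]}

theorem bijective_sylvesterMap_of_isUnit_resultant (hf : f.natDegree ≤ m) (hg : g.natDegree ≤ n)
    (hres : IsUnit (f.resultant g m n)) : Function.Bijective (sylvesterMap f g hf hg) := by
  constructor
  · refine Function.Injective.of_comp (f := adjSylvester f g) ?_
    rw [← LinearMap.coe_comp, adjSylvester_comp_sylveserMap]
    exact hres.smul_bijective.injective
  · refine Function.Surjective.of_comp (g := adjSylvester f g) ?_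
    rw [← LinearMap.coe_comp, sylveserMap_comp_adjSylvester]
    exact hres.smul_bijective.surjective

theorem existsUnique_bezout_pair_for_power_general (hf : f.natDegree ≤ m) (hg : g.natDegree ≤ n)
    (hres : IsUnit (f.resultant g m n)) {p : R[X]} (hp : p.degree < (m + n : ℕ)) :
    ∃! ab : R[X] × R[X],
      ab.1.degree < (n : WithBot ℕ) ∧ ab.2.degree < (m : WithBot ℕ) ∧
      ab.1 * f + ab.2 * g = p := by
  obtain ⟨⟨b, a⟩, hab, unique⟩ :=
    (bijective_sylvesterMap_of_isUnit_resultant hf hg hres).existsUnique ⟨p, mem_degreeLT.2 hp⟩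
  have bezout : f * a + g * b = p := congrArg Subtype.val hab
  refine ⟨(a, b), ⟨mem_degreeLT.1 a.2, mem_degreeLT.1 b.2, by linear_combination bezout⟩, ?_⟩
  rintro ⟨a', b'⟩ ⟨ha', hb', bezout'⟩
  have heq := unique (⟨b', mem_degreeLT.2 hb'⟩, ⟨a', mem_degreeLT.2 ha'⟩) <|
    Subtype.ext (show f * a' + g * b' = p by linear_combination bezout')
  cases heq
  rfl

end CommRing

/-- **Invertibility of the Sylvester map.**  Let `f, g` be nonzero polynomials over a
field `F` with `n = deg f`, `m = deg g`, and suppose `f` and `g` are coprime.  Then for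
every `k < n + m` there is a unique pair `(a, b)` of polynomials with `deg a < m`,
`deg b < n` (with the convention `deg 0 = -∞`) such that `a·f + b·g = x^k`. -/
theorem existsUnique_bezout_pair_for_power {F : Type*} [Field F] (f g : Polynomial F)
    (hf : f ≠ 0) (hg : g ≠ 0) (hco : IsCoprime f g) (k : ℕ)
    (hk : k < f.natDegree + g.natDegree) :
    ∃! ab : Polynomial F × Polynomial F,
      ab.1.degree < (g.natDegree : WithBot ℕ) ∧ ab.2.degree < (f.natDegree : WithBot ℕ) ∧
      ab.1 * f + ab.2 * g = Polynomial.X ^ k := by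
  exact existsUnique_bezout_pair_for_power_general le_rfl le_rfl
    (resultant_ne_zero f g hco).isUnit (by simpa only [degree_X_pow, Nat.cast_lt] using hk)
end

section
/- Let F be a field of characteristic zero, α₁,…,α_k ∈ F pairwise distinct, a₁,…,a_k positive natural numbers, and f = ∏_{i=1}^k (x − αᵢ)^{aᵢ}. For j ≥ 0 set g_j := gcd(f, f^{(1)}, …, f^{(j)}), the monic greatest common divisor of f and its first j derivatives. Then for every r ≥ 1, g_{r−1} · g_{r+1} = (∏_{i : aᵢ = r} (x − αᵢ)) · g_r². In particular the r-th component ∏_{i : aᵢ = r} (x − αᵢ) of the squarefree decomposition of f equals g_{r−1} g_{r+1} / g_r². -/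
/-- `derGcd f j` is the monic greatest common divisor `gcd(f, f⁽¹⁾, …, f⁽ʲ⁾)` of `f` and
its first `j` formal derivatives. -/
noncomputable def derGcd {F : Type*} [Field F] [DecidableEq F] (f : Polynomial F) (j : ℕ) :
    Polynomial F :=
  (Finset.range (j + 1)).gcd fun t => Polynomial.derivative^[t] f

/-!
The gcds satisfy `g_{j+1} = gcd(g_j, g_j')`: a Bézout expression for `g_j` exhibits `g_j'` as a
combination of `f, …, f⁽ʲ⁺¹⁾`, and conversely `f⁽ᵗ⁾ = g_j c` gives `f⁽ᵗ⁺¹⁾ = g_j' c + g_j c'`.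
The map `f ↦ gcd(f, f')` is multiplicative on coprime factors and sends `p ^ n` to `p ^ (n - 1)`
for `p` monic separable and `n ≠ 0` in `F`. Hence, for `f = ∏ pᵢ ^ aᵢ` with such `pᵢ`, pairwise
coprime, and the characteristic zero or larger than every `aᵢ` (that is, `aᵢ! ≠ 0` in `F`),
`g_j = ∏ pᵢ ^ (aᵢ - j)` with truncated subtraction. The second difference of `j ↦ aᵢ - j` at `r` is
`1` if `aᵢ = r` and `0` otherwise.
-/

section

open Polynomial
open scoped Nat

theorem gcd_mul_left_of_isRelPrime {M : Type*} [CommMonoidWithZero M]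
    [StrongNormalizedGCDMonoid M] {u v : M} (huv : IsRelPrime u v) (w : M) :
    gcd (u * v) w = gcd u w * gcd v w := by
  refine dvd_antisymm_of_normalize_eq (normalize_gcd _ _) (by simp) ?_ ?_
  · simpa only [gcd_comm w] using gcd_mul_dvd_mul_gcd w u v
  · have hgcd : IsRelPrime (gcd u w) (gcd v w) :=
      (huv.of_dvd_left (gcd_dvd_left u w)).of_dvd_right (gcd_dvd_left v w)
    exact dvd_gcd (mul_dvd_mul (gcd_dvd_left u w) (gcd_dvd_left v w))
      (hgcd.mul_dvd (gcd_dvd_right u w) (gcd_dvd_right v w))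

theorem gcd_mul_right_eq_of_isRelPrime {M : Type*} [CommMonoidWithZero M]
    [NormalizedGCDMonoid M] {u v : M} (huv : IsRelPrime u v) (w : M) :
    gcd u (w * v) = gcd u w := by
  refine dvd_antisymm_of_normalize_eq (normalize_gcd _ _) (normalize_gcd _ _) ?_ ?_
  · have hgcd : IsRelPrime (gcd u (w * v)) v := huv.of_dvd_left (gcd_dvd_left _ _)
    exact dvd_gcd (gcd_dvd_left _ _) (hgcd.dvd_of_dvd_mul_right (gcd_dvd_right _ _))
  · exact gcd_dvd_gcd_mul_right_right u w v

variable {F : Type*} [Field F] [DecidableEq F] {ι : Type*}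

theorem dvd_derivative_finset_gcd {s : Finset ι} {q : ι → F[X]} {d : F[X]}
    (hq : ∀ i ∈ s, d ∣ q i) (hq' : ∀ i ∈ s, d ∣ derivative (q i)) :
    d ∣ derivative (s.gcd q) := by
  induction s using Finset.cons_induction with
  | empty => simp
  | cons i s hi ih =>
    rw [Finset.forall_mem_cons] at hq hq'
    obtain ⟨x, y, bezout⟩ := exists_gcd_eq_mul_add_mul (q i) (s.gcd q)
    rw [Finset.gcd_cons, bezout, derivative_add, derivative_mul, derivative_mul]
    have hgcd : d ∣ s.gcd q := Finset.dvd_gcd hq.2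
    have hgcd' : d ∣ derivative (s.gcd q) := ih hq.2 hq'.2
    exact dvd_add (dvd_add (hq'.1.mul_right _) (hq.1.mul_right _))
      (dvd_add (hgcd'.mul_right _) (hgcd.mul_right _))

theorem gcd_derivative_mul {u v : F[X]} (huv : IsCoprime u v) :
    gcd (u * v) (derivative (u * v)) = gcd u (derivative u) * gcd v (derivative v) := by
  have hu : gcd u (derivative (u * v)) = gcd u (derivative u) := calc
    _ = gcd u (derivative u * v) := gcd_eq_of_dvd_sub_right ⟨derivative v, by simp⟩
    _ = gcd u (derivative u) := gcd_mul_right_eq_of_isRelPrime huv.isRelPrime _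
  have hv : gcd v (derivative (u * v)) = gcd v (derivative v) := calc
    _ = gcd v (derivative v * u) :=
      gcd_eq_of_dvd_sub_right ⟨derivative u, by rw [derivative_mul]; ring⟩
    _ = gcd v (derivative v) := gcd_mul_right_eq_of_isRelPrime huv.symm.isRelPrime _
  rw [gcd_mul_left_of_isRelPrime huv.isRelPrime, hu, hv]

theorem gcd_derivative_pow {p : F[X]} (hp : p.Monic) (hsep : p.Separable) {n : ℕ}
    (hn : (n : F) ≠ 0) : gcd (p ^ n) (derivative (p ^ n)) = p ^ (n - 1) := by
  have hn0 : n ≠ 0 := fun h => hn (by simp [h])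
  have hcop : IsCoprime p (C (n : F) * derivative p) :=
    (isCoprime_mul_unit_left_right (isUnit_C.2 hn.isUnit) _ _).2 hsep
  have hgcd : gcd p (C (n : F) * derivative p) = 1 := by
    rw [← normalize_gcd, normalize_eq_one, gcd_isUnit_iff]
    exact hcop
  calc gcd (p ^ n) (derivative (p ^ n))
      = gcd (p ^ (n - 1) * p) (p ^ (n - 1) * (C (n : F) * derivative p)) := by
        rw [pow_sub_one_mul hn0, derivative_pow]; ring_nf
    _ = p ^ (n - 1) := by
        rw [gcd_mul_left, hgcd, mul_one, (hp.pow _).normalize_eq_self]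

theorem derGcd_zero (f : F[X]) : derGcd f 0 = normalize f := by
  simp [derGcd]

theorem derGcd_dvd_iterate_derivative (f : F[X]) {t j : ℕ} (h : t ≤ j) :
    derGcd f j ∣ derivative^[t] f :=
  Finset.gcd_dvd (f := fun t => derivative^[t] f) (Finset.mem_range_succ_iff.2 h)

theorem dvd_derGcd_iff {d f : F[X]} {j : ℕ} :
    d ∣ derGcd f j ↔ ∀ t ≤ j, d ∣ derivative^[t] f := by
  simp only [derGcd, Finset.dvd_gcd_iff, Finset.mem_range_succ_iff]

theorem derGcd_dvd (f : F[X]) (j : ℕ) : derGcd f j ∣ f :=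
  derGcd_dvd_iterate_derivative f j.zero_le

theorem derGcd_one (j : ℕ) : derGcd (1 : F[X]) j = 1 :=
  dvd_antisymm_of_normalize_eq Finset.normalize_gcd normalize_one (derGcd_dvd 1 j) (one_dvd _)

theorem derGcd_succ (f : F[X]) (j : ℕ) :
    derGcd f (j + 1) = gcd (derGcd f j) (derivative (derGcd f j)) := by
  refine dvd_antisymm_of_normalize_eq Finset.normalize_gcd (normalize_gcd _ _)
    (dvd_gcd ?_ ?_) (dvd_derGcd_iff.2 fun t ht => ?_)
  · exact dvd_derGcd_iff.2 fun t ht => derGcd_dvd_iterate_derivative f (by lia)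
  · refine dvd_derivative_finset_gcd (fun t ht => ?_) (fun t ht => ?_) <;>
      rw [Finset.mem_range_succ_iff] at ht
    · exact derGcd_dvd_iterate_derivative f (by lia)
    · rw [← Function.iterate_succ_apply' derivative]
      exact derGcd_dvd_iterate_derivative f (by lia)
  · rcases t with _ | t
    · exact (gcd_dvd_left _ _).trans (derGcd_dvd f j)
    · obtain ⟨c, hc⟩ := derGcd_dvd_iterate_derivative f (Nat.le_of_succ_le_succ ht)
      rw [Function.iterate_succ_apply', hc, derivative_mul]
      exact dvd_add ((gcd_dvd_right _ _).mul_right _) ((gcd_dvd_left _ _).mul_right _)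

theorem derGcd_mul {u v : F[X]} (huv : IsCoprime u v) (j : ℕ) :
    derGcd (u * v) j = derGcd u j * derGcd v j := by
  induction j with
  | zero => simp only [derGcd_zero, normalize_mul]
  | succ j ih =>
    have hcop : IsCoprime (derGcd u j) (derGcd v j) :=
      huv.mono (derGcd_dvd u j) (derGcd_dvd v j)
    rw [derGcd_succ, ih, gcd_derivative_mul hcop, ← derGcd_succ, ← derGcd_succ]

theorem derGcd_pow {p : F[X]} (hp : p.Monic) (hsep : p.Separable) {n : ℕ}
    (hn : (n ! : F) ≠ 0) (j : ℕ) : derGcd (p ^ n) j = p ^ (n - j) := by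
  induction j with
  | zero => rw [derGcd_zero, (hp.pow n).normalize_eq_self, Nat.sub_zero]
  | succ j ih =>
    rw [derGcd_succ, ih, ← Nat.sub_sub]
    rcases Nat.eq_zero_or_pos (n - j) with hzero | hpos
    · simp [hzero]
    · have hcast : ((n - j : ℕ) : F) ≠ 0 :=
        ne_zero_of_dvd_ne_zero hn (Nat.cast_dvd_cast (Nat.dvd_factorial hpos (Nat.sub_le n j)))
      exact gcd_derivative_pow hp hsep hcast

theorem derGcd_prod {s : Finset ι} {q : ι → F[X]}
    (hq : (s : Set ι).Pairwise (Function.onFun IsCoprime q)) (j : ℕ) :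
    derGcd (∏ i ∈ s, q i) j = ∏ i ∈ s, derGcd (q i) j := by
  induction s using Finset.cons_induction with
  | empty => simp only [Finset.prod_empty, derGcd_one]
  | cons i s hi ih =>
    rw [Finset.coe_cons, Set.pairwise_insert_of_symm_of_notMem (Finset.mem_coe.not.2 hi)] at hq
    rw [Finset.prod_cons, Finset.prod_cons, derGcd_mul (IsCoprime.prod_right hq.2), ih hq.1]

theorem derGcd_prod_pow {s : Finset ι} {p : ι → F[X]} {a : ι → ℕ}
    (hmonic : ∀ i ∈ s, (p i).Monic) (hsep : ∀ i ∈ s, (p i).Separable)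
    (hcop : (s : Set ι).Pairwise (Function.onFun IsCoprime p))
    (ha : ∀ i ∈ s, ((a i)! : F) ≠ 0) (j : ℕ) :
    derGcd (∏ i ∈ s, p i ^ a i) j = ∏ i ∈ s, p i ^ (a i - j) := by
  rw [derGcd_prod (fun i hi i' hi' hne => (hcop hi hi' hne).pow)]
  exact Finset.prod_congr rfl fun i hi => derGcd_pow (hmonic i hi) (hsep i hi) (ha i hi) j

theorem prod_pow_tsub_second_difference {M : Type*} [CommMonoid M] (s : Finset ι) (p : ι → M)
    (a : ι → ℕ) {r : ℕ} (hr : 1 ≤ r) :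
    (∏ i ∈ s, p i ^ (a i - (r - 1))) * ∏ i ∈ s, p i ^ (a i - (r + 1)) =
      (∏ i ∈ s with a i = r, p i) * (∏ i ∈ s, p i ^ (a i - r)) ^ 2 := by
  rw [Finset.prod_filter, ← Finset.prod_pow, ← Finset.prod_mul_distrib,
    ← Finset.prod_mul_distrib]
  refine Finset.prod_congr rfl fun i _ => ?_
  rw [← pow_add, ← pow_mul]
  split_ifs with hi
  · rw [← pow_succ']
    congr 1
    lia
  · rw [one_mul]
    congr 1
    lia

theorem squarefree_component_eq_gcd_ratio_general (s : Finset ι) (p : ι → F[X])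
    (hmonic : ∀ i ∈ s, (p i).Monic) (hsep : ∀ i ∈ s, (p i).Separable)
    (hcop : (s : Set ι).Pairwise (Function.onFun IsCoprime p)) (a : ι → ℕ)
    (ha : ∀ i ∈ s, ((a i)! : F) ≠ 0) (r : ℕ) (hr : 1 ≤ r) :
    derGcd (∏ i ∈ s, p i ^ a i) (r - 1) * derGcd (∏ i ∈ s, p i ^ a i) (r + 1) =
      (∏ i ∈ s with a i = r, p i) * derGcd (∏ i ∈ s, p i ^ a i) r ^ 2 ∧
    (∏ i ∈ s with a i = r, p i) =
      derGcd (∏ i ∈ s, p i ^ a i) (r - 1) * derGcd (∏ i ∈ s, p i ^ a i) (r + 1) /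
        derGcd (∏ i ∈ s, p i ^ a i) r ^ 2 := by
  simp only [derGcd_prod_pow hmonic hsep hcop ha]
  have hne : (∏ i ∈ s, p i ^ (a i - r)) ^ 2 ≠ 0 :=
    pow_ne_zero 2 (Finset.prod_ne_zero_iff.2 fun i hi => pow_ne_zero _ (hmonic i hi).ne_zero)
  have hmul := prod_pow_tsub_second_difference s p a hr
  exact ⟨hmul, by rw [hmul, mul_div_cancel_right₀ _ hne]⟩

end

open Polynomial in
/-- **Squarefree decomposition from GCDs with derivatives.**  Let `F` be a field of
characteristic zero, `α₁, …, α_k ∈ F` pairwise distinct, `a₁, …, a_k ≥ 1`, and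
`f = ∏ᵢ (x - αᵢ)^{aᵢ}`.  Setting `g_j := gcd(f, f⁽¹⁾, …, f⁽ʲ⁾)`, for every `r ≥ 1` one has
`g_{r-1} · g_{r+1} = (∏_{i : aᵢ = r} (x - αᵢ)) · g_r²`; in particular the `r`-th component
`∏_{i : aᵢ = r} (x - αᵢ)` of the squarefree decomposition of `f` equals
`g_{r-1} g_{r+1} / g_r²`. -/
theorem squarefree_component_eq_gcd_ratio {F : Type*} [Field F] [CharZero F] [DecidableEq F]
    (k : ℕ) (α : Fin k → F) (hα : Function.Injective α) (a : Fin k → ℕ)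
    (ha : ∀ i, 1 ≤ a i) (r : ℕ) (hr : 1 ≤ r) :
    derGcd (∏ i : Fin k, (X - C (α i)) ^ a i) (r - 1) *
        derGcd (∏ i : Fin k, (X - C (α i)) ^ a i) (r + 1) =
      (∏ i ∈ Finset.univ.filter (fun i => a i = r), (X - C (α i))) *
        derGcd (∏ i : Fin k, (X - C (α i)) ^ a i) r ^ 2 ∧
    (∏ i ∈ Finset.univ.filter (fun i => a i = r), (X - C (α i))) =
      derGcd (∏ i : Fin k, (X - C (α i)) ^ a i) (r - 1) *
          derGcd (∏ i : Fin k, (X - C (α i)) ^ a i) (r + 1) /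
        derGcd (∏ i : Fin k, (X - C (α i)) ^ a i) r ^ 2 :=
  squarefree_component_eq_gcd_ratio_general Finset.univ _
    (fun i _ => monic_X_sub_C (α i)) (fun i _ => separable_X_sub_C)
    ((pairwise_coprime_X_sub_C hα).set_pairwise _) a
    (fun i _ => Nat.cast_ne_zero.2 (a i).factorial_ne_zero) r hr
end

section
/- Let F be a field of characteristic zero with algebraic closure K. Let f, g ∈ F[x] be monic polynomials, let γ₁,…,γ_k ∈ K be pairwise distinct, and let a₁,…,a_k, b₁,…,b_k be natural numbers with aᵢ + bᵢ ≥ 1 for every i, such that in K[x] one has f = ∏_{i=1}^k (x − γᵢ)^{aᵢ} and g = ∏_{i=1}^k (x − γᵢ)^{bᵢ}. Then for every function P : ℕ × ℕ → ℕ, the polynomial (f ⋄_P g)(x) := ∏_{i=1}^k (x − γᵢ)^{P(aᵢ, bᵢ)} has all coefficients in F; that is, there exists a monic polynomial h ∈ F[x] whose image in K[x] equals ∏_{i=1}^k (x − γᵢ)^{P(aᵢ, bᵢ)}. -/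
/-!
An automorphism of `K` over `F` preserves multiplicities of roots of polynomials over `F`. It
therefore permutes the `γᵢ` in such a way that `aᵢ` and `bᵢ`, hence `P(aᵢ, bᵢ)`, are constant on
orbits, and so it fixes `∏ᵢ (x - γᵢ)^{P(aᵢ, bᵢ)}`. A polynomial fixed by all automorphisms has its
coefficients in the fixed field, which is `F` because `K / F` is Galois. The same argument applies
to any group acting on an integral domain, with the ring of invariants in place of `F`.
-/

section

open Polynomial

section ProdXSubCPow

variable {B ι : Type*} [CommRing B] [IsDomain B] [Fintype ι] {γ : ι → B}

theorem rootMultiplicity_prod_X_sub_C_pow (hγ : Function.Injective γ) (a : ι → ℕ) (i : ι) :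
    (∏ j, (X - C (γ j)) ^ a j).rootMultiplicity (γ i) = a i := by
  classical
  have not_root : ¬ (∏ j ∈ Finset.univ.erase i, (X - C (γ j)) ^ a j).IsRoot (γ i) := by
    simp only [IsRoot.def, eval_prod, eval_pow, eval_sub, eval_X, eval_C]
    exact Finset.prod_ne_zero_iff.mpr fun j hj =>
      pow_ne_zero _ (sub_ne_zero.mpr (hγ.ne (Finset.ne_of_mem_erase hj).symm))
  have ne_zero : ∏ j ∈ Finset.univ.erase i, (X - C (γ j)) ^ a j ≠ 0 :=
    fun h => not_root (h ▸ eval_zero)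
  rw [← Finset.prod_erase_mul _ _ (Finset.mem_univ i), rootMultiplicity_mul_X_sub_C_pow ne_zero,
    rootMultiplicity_eq_zero not_root, zero_add]

theorem mem_range_of_isRoot_prod_X_sub_C_pow {a : ι → ℕ} {z : B}
    (hz : (∏ j, (X - C (γ j)) ^ a j).IsRoot z) : z ∈ Set.range γ := by
  simp only [IsRoot.def, eval_prod, eval_pow, eval_sub, eval_X, eval_C] at hz
  obtain ⟨j, -, hj⟩ := Finset.prod_eq_zero_iff.mp hz
  exact ⟨j, (sub_eq_zero.mp (eq_zero_of_pow_eq_zero hj)).symm⟩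

end ProdXSubCPow

section GroupAction

variable {G B ι : Type*} [Group G] [CommRing B] [MulSemiringAction G B]

theorem rootMultiplicity_smul_smul (σ : G) (p : B[X]) (z : B) :
    (σ • p).rootMultiplicity (σ • z) = p.rootMultiplicity z := by
  rw [smul_eq_map]
  exact (eq_rootMultiplicity_map (f := MulSemiringAction.toRingHom G B σ)
    (MulAction.injective σ) z).symm

theorem smul_prod_X_sub_C_pow_eq_self [Fintype ι] {γ : ι → B} (hγ : Function.Injective γ)
    (e : ι → ℕ) (σ : G) (hσ : ∀ i, ∃ j, γ j = σ • γ i ∧ e j = e i) :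
    σ • ∏ i, (X - C (γ i)) ^ e i = ∏ i, (X - C (γ i)) ^ e i := by
  choose π hπγ hπe using hσ
  have π_injective : Function.Injective π := fun i j hij =>
    hγ (smul_left_cancel σ (by rw [← hπγ, ← hπγ, hij]))
  rw [Finset.smul_prod']
  refine Fintype.prod_bijective π (Finite.injective_iff_bijective.mp π_injective) _ _ fun i => ?_
  rw [smul_pow', smul_sub, smul_X, smul_C, hπγ, hπe]

end GroupAction

section Descent

variable {G A B : Type*} [Group G] [CommSemiring A] [Semiring B] [Algebra A B]
  [MulSemiringAction G B]

theorem exists_monic_map_eq_of_forall_smul_eq [Algebra.IsInvariant A B G] {p : B[X]}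
    (hp : p.Monic) (hfix : ∀ σ : G, σ • p = p) :
    ∃ h : A[X], h.Monic ∧ h.map (algebraMap A B) = p := by
  have coeff_fixed (n : ℕ) (σ : G) : σ • p.coeff n = p.coeff n := by
    rw [← coeff_smul, hfix]
  have p_lifts : p ∈ lifts (algebraMap A B) := (lifts_iff_coeff_lifts p).mpr fun n =>
    Algebra.IsInvariant.isInvariant (p.coeff n) (coeff_fixed n)
  obtain ⟨h, h_map, -, h_monic⟩ := lifts_and_natDegree_eq_and_monic p_lifts hp
  exact ⟨h, h_monic, h_map⟩

theorem smul_map_algebraMap [SMulCommClass G A B] (σ : G) (f : A[X]) :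
    σ • f.map (algebraMap A B) = f.map (algebraMap A B) := by
  ext n
  rw [coeff_smul, coeff_map, smul_algebraMap]

end Descent

section Diamond

variable {G A B ι : Type*} [Group G] [CommSemiring A] [CommRing B] [Algebra A B]
  [MulSemiringAction G B] [SMulCommClass G A B]

theorem rootMultiplicity_smul_map_algebraMap (σ : G) (f : A[X]) (z : B) :
    (f.map (algebraMap A B)).rootMultiplicity (σ • z) =
      (f.map (algebraMap A B)).rootMultiplicity z := by
  rw [← rootMultiplicity_smul_smul σ _ z, smul_map_algebraMap]

variable [IsDomain B] [Fintype ι] {f g : A[X]} {γ : ι → B} {a b : ι → ℕ}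

theorem smul_mem_range_of_map_eq_prod_X_sub_C_pow
    (hf : f.map (algebraMap A B) = ∏ i, (X - C (γ i)) ^ a i) (σ : G) {i : ι} (hi : a i ≠ 0) :
    σ • γ i ∈ Set.range γ := by
  have root : (f.map (algebraMap A B)).IsRoot (γ i) := by
    rw [hf, IsRoot.def, eval_prod]
    exact Finset.prod_eq_zero (Finset.mem_univ i) (by simp [hi])
  have smul_root : (f.map (algebraMap A B)).IsRoot (σ • γ i) := by
    rw [← smul_map_algebraMap σ f, IsRoot.def, smul_eval_smul, root.eq_zero, smul_zero]
  exact mem_range_of_isRoot_prod_X_sub_C_pow (hf ▸ smul_root)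

theorem exponent_eq_of_eq_smul (hγ : Function.Injective γ)
    (hf : f.map (algebraMap A B) = ∏ i, (X - C (γ i)) ^ a i) {σ : G} {i j : ι}
    (hij : γ j = σ • γ i) : a j = a i := by
  have multiplicity (l : ι) : (f.map (algebraMap A B)).rootMultiplicity (γ l) = a l :=
    hf ▸ rootMultiplicity_prod_X_sub_C_pow hγ a l
  rw [← multiplicity j, hij, rootMultiplicity_smul_map_algebraMap, multiplicity i]

variable (G) in
theorem diamond_map_mem_base_field_general [Algebra.IsInvariant A B G]
    (hγ : Function.Injective γ) (hab : ∀ i, 1 ≤ a i + b i)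
    (hf : f.map (algebraMap A B) = ∏ i, (X - C (γ i)) ^ a i)
    (hg : g.map (algebraMap A B) = ∏ i, (X - C (γ i)) ^ b i) (P : ℕ → ℕ → ℕ) :
    ∃ h : A[X], h.Monic ∧
      h.map (algebraMap A B) = ∏ i, (X - C (γ i)) ^ P (a i) (b i) := by
  refine exists_monic_map_eq_of_forall_smul_eq (G := G)
    (monic_prod_of_monic _ _ fun i _ => (monic_X_sub_C _).pow _) fun σ => ?_
  refine smul_prod_X_sub_C_pow_eq_self hγ _ σ fun i => ?_
  have smul_mem_range : σ • γ i ∈ Set.range γ := by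
    obtain ha | hb : a i ≠ 0 ∨ b i ≠ 0 := by have := hab i; lia
    · exact smul_mem_range_of_map_eq_prod_X_sub_C_pow hf σ ha
    · exact smul_mem_range_of_map_eq_prod_X_sub_C_pow hg σ hb
  obtain ⟨j, hj⟩ := smul_mem_range
  exact ⟨j, hj, by rw [exponent_eq_of_eq_smul hγ hf hj, exponent_eq_of_eq_smul hγ hg hj]⟩

end Diamond

end

open Polynomial in
/-- **Arbitrary functions of root multiplicities are defined over the base field.**
Let `F` be a field of characteristic zero with algebraic closure `K`.  Let `f, g ∈ F[x]`
be monic, let `γ₁, …, γ_k ∈ K` be pairwise distinct, and let `a₁, …, a_k, b₁, …, b_k` be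
natural numbers with `aᵢ + bᵢ ≥ 1` for every `i`, such that in `K[x]` one has
`f = ∏ᵢ (x - γᵢ)^{aᵢ}` and `g = ∏ᵢ (x - γᵢ)^{bᵢ}`.  Then for every `P : ℕ × ℕ → ℕ` the
polynomial `(f ⋄_P g)(x) = ∏ᵢ (x - γᵢ)^{P(aᵢ, bᵢ)}` has all its coefficients in `F`:
there is a monic `h ∈ F[x]` whose image in `K[x]` is `∏ᵢ (x - γᵢ)^{P(aᵢ, bᵢ)}`. -/
theorem diamond_map_mem_base_field {F K : Type*} [Field F] [CharZero F] [Field K]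
    [Algebra F K] [IsAlgClosure F K] (f g : Polynomial F) (hf : f.Monic) (hg : g.Monic)
    (k : ℕ) (γ : Fin k → K) (hγ : Function.Injective γ) (a b : Fin k → ℕ)
    (hab : ∀ i, 1 ≤ a i + b i)
    (hfK : f.map (algebraMap F K) = ∏ i : Fin k, (X - C (γ i)) ^ a i)
    (hgK : g.map (algebraMap F K) = ∏ i : Fin k, (X - C (γ i)) ^ b i)
    (P : ℕ → ℕ → ℕ) :
    ∃ h : Polynomial F, h.Monic ∧
      h.map (algebraMap F K) = ∏ i : Fin k, (X - C (γ i)) ^ P (a i) (b i) := by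
  exact diamond_map_mem_base_field_general Gal(K/F) hγ hab hfK hgK P
end

section
/- Let F be a field of characteristic zero with algebraic closure K, and let m ≥ 1. Let f₁,…,f_m ∈ F[x] be monic polynomials, let γ₁,…,γ_k ∈ K be pairwise distinct, and let a_{j,i} (1 ≤ j ≤ m, 1 ≤ i ≤ k) be natural numbers with, for every i, a_{j,i} ≥ 1 for at least one j, such that in K[x] one has f_j = ∏_{i=1}^k (x − γᵢ)^{a_{j,i}} for each j. Then for every function P : ℕ^m → ℕ, the polynomial ⋄_P(f₁,…,f_m)(x) := ∏_{i=1}^k (x − γᵢ)^{P(a_{1,i},…,a_{m,i})} has all coefficients in F; that is, there exists a monic polynomial h ∈ F[x] whose image in K[x] equals ∏_{i=1}^k (x − γᵢ)^{P(a_{1,i},…,a_{m,i})}. -/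
/-!
An automorphism `σ` of `K` over `F` fixes each `f_j`, so it permutes the roots of the family
`f₁, …, f_m` while preserving the whole vector of multiplicities of each root.  It therefore
permutes the factors of `⋄_P(f₁, …, f_m)`, whose coefficients are then fixed by the Galois group.
-/

section Diamond

open Polynomial Finset

variable {ι κ R S F K : Type*} [CommRing R] [CommRing S] [Field F] [Field K] [Algebra F K]

/-- The polynomial `⋄_P(f)` of a family `f` of polynomials: the product of `(X - x) ^ P(a)` over all
`x` that are a root of at least one `f j`, where `a j` is the multiplicity of `x` in `f j`.
A zero polynomial contributes no roots, since its multiplicities are `0` by convention, and the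
product is `1` if infinitely many of its factors differ from `1`. -/
noncomputable def diamond (P : (ι → ℕ) → ℕ) (f : ι → R[X]) : R[X] :=
  ∏ᶠ x ∈ {x | ∃ j, (f j).rootMultiplicity x ≠ 0},
    (X - C x) ^ P fun j => (f j).rootMultiplicity x

theorem monic_diamond (P : (ι → ℕ) → ℕ) (f : ι → R[X]) : (diamond P f).Monic :=
  finprod_mem_induction Monic monic_one (fun _ _ => Monic.mul) fun x _ => (monic_X_sub_C x).pow _

theorem map_diamond (P : (ι → ℕ) → ℕ) (f : ι → R[X]) (σ : R ≃+* S) :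
    (diamond P f).map (σ : R →+* S) = diamond P fun j => (f j).map (σ : R →+* S) := by
  have rootMultiplicity_map (x : R) (j : ι) :
      ((f j).map (σ : R →+* S)).rootMultiplicity (σ x) = (f j).rootMultiplicity x :=
    (eq_rootMultiplicity_map (f := (σ : R →+* S)) σ.injective x).symm
  calc (diamond P f).map (σ : R →+* S)
    _ = mapEquiv σ (diamond P f) := rfl
    _ = ∏ᶠ (x) (_ : ∃ j, (f j).rootMultiplicity x ≠ 0),
          (X - C (σ x)) ^ P fun j => (f j).rootMultiplicity x := by
      simp [diamond, MulEquivClass.map_finprod]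
    _ = diamond P fun j => (f j).map (σ : R →+* S) := by
      refine finprod_eq_of_bijective σ σ.bijective fun x => ?_
      simp only [Set.mem_ofPred_eq, rootMultiplicity_map]

theorem rootMultiplicity_prod_X_sub_C_pow_s13 [IsDomain R] [DecidableEq R] (s : Finset κ) (γ : κ → R)
    (a : κ → ℕ) (x : R) :
    (∏ i ∈ s, (X - C (γ i)) ^ a i).rootMultiplicity x = ∑ i ∈ s with γ i = x, a i := by
  have hne : ∏ i ∈ s, (X - C (γ i)) ^ a i ≠ 0 :=
    prod_ne_zero_iff.mpr fun i _ => pow_ne_zero _ (X_sub_C_ne_zero _)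
  rw [← count_roots, roots_prod _ _ hne, Multiset.count_bind, sum_filter]
  simp [Multiset.count_singleton, eq_comm]

theorem diamond_prod_X_sub_C_pow [IsDomain R] [Fintype κ] (P : (ι → ℕ) → ℕ) {γ : κ → R}
    (hγ : Function.Injective γ) {a : ι → κ → ℕ} (ha : ∀ i, ∃ j, a j i ≠ 0) :
    (diamond P fun j => ∏ i, (X - C (γ i)) ^ a j i) =
      ∏ i, (X - C (γ i)) ^ P fun j => a j i := by
  classical
  have multiplicity_root (i : κ) (j : ι) :
      (∏ i, (X - C (γ i)) ^ a j i).rootMultiplicity (γ i) = a j i := by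
    simp [rootMultiplicity_prod_X_sub_C_pow_s13, hγ.eq_iff, sum_filter]
  have roots_eq_range :
      {x | ∃ j, (∏ i, (X - C (γ i)) ^ a j i).rootMultiplicity x ≠ 0} = Set.range γ := by
    ext x
    constructor
    · rintro ⟨j, hj⟩
      rw [rootMultiplicity_prod_X_sub_C_pow_s13] at hj
      obtain ⟨i, hi, -⟩ := exists_ne_zero_of_sum_ne_zero hj
      exact ⟨i, (mem_filter.mp hi).2⟩
    · rintro ⟨i, rfl⟩
      simpa only [Set.mem_ofPred_eq, multiplicity_root] using ha i
  rw [diamond, roots_eq_range, finprod_mem_range hγ, finprod_eq_prod_of_fintype]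
  simp only [multiplicity_root]

theorem mem_lifts_iff_forall_map_eq [IsGalois F K] {p : K[X]} :
    p ∈ lifts (algebraMap F K) ↔ ∀ σ : Gal(K/F), p.map (σ : K →+* K) = p := by
  simp only [lifts_iff_coeff_lifts, InfiniteGalois.mem_range_algebraMap_iff_fixed,
    Polynomial.ext_iff, coeff_map, RingHom.coe_coe]
  exact forall_comm

theorem diamond_map_algebraMap_mem_lifts [IsGalois F K] (P : (ι → ℕ) → ℕ) (f : ι → F[X]) :
    (diamond P fun j => (f j).map (algebraMap F K)) ∈ lifts (algebraMap F K) := by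
  refine mem_lifts_iff_forall_map_eq.mpr fun σ => ?_
  have map_base (j : ι) :
      ((f j).map (algebraMap F K)).map (σ : K →+* K) = (f j).map (algebraMap F K) :=
    (Polynomial.map_map _ _ _).trans (congrArg (map · (f j)) σ.toAlgHom.comp_algebraMap)
  exact (map_diamond P _ σ.toRingEquiv).trans (congrArg (diamond P) (funext map_base))

theorem multi_diamond_map_mem_base_field_general [IsGalois F K] [Fintype κ] {f : ι → F[X]}
    {γ : κ → K} (hγ : Function.Injective γ) {a : ι → κ → ℕ} (ha : ∀ i, ∃ j, a j i ≠ 0)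
    (hfK : ∀ j, (f j).map (algebraMap F K) = ∏ i, (X - C (γ i)) ^ a j i) (P : (ι → ℕ) → ℕ) :
    ∃ h : F[X], h.Monic ∧
      h.map (algebraMap F K) = ∏ i, (X - C (γ i)) ^ P fun j => a j i := by
  obtain ⟨h, h_map, -, h_monic⟩ := lifts_and_natDegree_eq_and_monic
    (diamond_map_algebraMap_mem_lifts (K := K) P f) (monic_diamond P _)
  refine ⟨h, h_monic, ?_⟩
  rw [h_map, funext hfK, diamond_prod_X_sub_C_pow P hγ ha]

end Diamond

open Polynomial in
/-- **Arbitrary functions of root multiplicities of several polynomials are defined over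
the base field.**  Let `F` be a field of characteristic zero with algebraic closure `K`,
and `m ≥ 1`.  Let `f₁, …, f_m ∈ F[x]` be monic, let `γ₁, …, γ_k ∈ K` be pairwise
distinct, and let `a_{j,i}` be natural numbers with, for every `i`, `a_{j,i} ≥ 1` for at
least one `j`, such that in `K[x]` one has `f_j = ∏ᵢ (x - γᵢ)^{a_{j,i}}` for each `j`.
Then for every `P : ℕ^m → ℕ` the polynomial
`⋄_P(f₁, …, f_m)(x) = ∏ᵢ (x - γᵢ)^{P(a_{1,i}, …, a_{m,i})}` has all its coefficients in
`F`: there is a monic `h ∈ F[x]` whose image in `K[x]` is that product. -/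
theorem multi_diamond_map_mem_base_field {F K : Type*} [Field F] [CharZero F] [Field K]
    [Algebra F K] [IsAlgClosure F K] (m : ℕ) (hm : 1 ≤ m) (f : Fin m → Polynomial F)
    (hf : ∀ j, (f j).Monic) (k : ℕ) (γ : Fin k → K) (hγ : Function.Injective γ)
    (a : Fin m → Fin k → ℕ) (ha : ∀ i, ∃ j, 1 ≤ a j i)
    (hfK : ∀ j, (f j).map (algebraMap F K) = ∏ i : Fin k, (X - C (γ i)) ^ a j i)
    (P : (Fin m → ℕ) → ℕ) :
    ∃ h : Polynomial F, h.Monic ∧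
      h.map (algebraMap F K) = ∏ i : Fin k, (X - C (γ i)) ^ P (fun j => a j i) := by
  have : IsGalois F K := { to_isSeparable := inferInstance, to_normal := IsAlgClosure.normal F K }
  exact multi_diamond_map_mem_base_field_general hγ
    (by simpa only [Nat.one_le_iff_ne_zero] using ha) hfK P
end
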